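/- Assume E₀, U, L, K satisfy the hypothesis and define h := {(x,y) ∈ BD(G) ⊕ BD(G) : π*_{BD(G)}x ∈ E₀ and K^⋄Kπ*_{BD(G)}x − L^⋄π*_{BD(D)}Ġy ∈ E}. Then h is selfadjoint, i.e. h = h*, where h* := {(v,−u) : (u,v) ∈ h}^⊥ with the orthogonal complement taken in BD(G) ⊕ BD(G). -/

import Mathlib

open scoped ComplexInnerProductSpace
open Filter Topology Classical

noncomputable section

variable {E H : Type*}
  [NormedAddCommGroup E] [InnerProductSpace ℂ E] [CompleteSpace E]
  [NormedAddCommGroup H] [InnerProductSpace ℂ H] [CompleteSpace H]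

/-- The operator `G := (−D₀)*`. -/
def Gop (D₀ : H →ₗ.[ℂ] E) : E →ₗ.[ℂ] H := (-D₀).adjoint

/-- The operator `D := −(G₀)*`. -/
def Dop (G₀ : E →ₗ.[ℂ] H) : H →ₗ.[ℂ] E := -(G₀.adjoint)

/-- Pointwise application of `G`, defined to be `0` off the domain. -/
def Gap (D₀ : H →ₗ.[ℂ] E) (u : E) : H :=
  if h : u ∈ (Gop D₀).domain then Gop D₀ ⟨u, h⟩ else 0

/-- Pointwise application of `D`, defined to be `0` off the domain. -/
def Dap (G₀ : E →ₗ.[ℂ] H) (w : H) : E :=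
  if h : w ∈ (Dop G₀).domain then Dop G₀ ⟨w, h⟩ else 0

/-- The graph inner product of `D_G`: `⟪x,y⟫_E + ⟪Gx,Gy⟫_H`. -/
def innG (D₀ : H →ₗ.[ℂ] E) (x y : E) : ℂ := ⟪x, y⟫ + ⟪Gap D₀ x, Gap D₀ y⟫

/-- The graph inner product of `D_D`: `⟪x,y⟫_H + ⟪Dx,Dy⟫_E`. -/
def innD (G₀ : E →ₗ.[ℂ] H) (x y : H) : ℂ := ⟪x, y⟫ + ⟪Dap G₀ x, Dap G₀ y⟫

/-- The boundary data space `BD(G)`, the orthogonal complement of `D(G₀)` in `D_G`. -/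
def BDG (G₀ : E →ₗ.[ℂ] H) (D₀ : H →ₗ.[ℂ] E) : Set E :=
  {u | u ∈ (Gop D₀).domain ∧ ∀ v ∈ G₀.domain, innG D₀ u v = 0}

/-- The boundary data space `BD(D)`, the orthogonal complement of `D(D₀)` in `D_D`. -/
def BDD (G₀ : E →ₗ.[ℂ] H) (D₀ : H →ₗ.[ℂ] E) : Set H :=
  {w | w ∈ (Dop G₀).domain ∧ ∀ v ∈ D₀.domain, innD G₀ w v = 0}

variable {U E₀ : Type*}
  [NormedAddCommGroup U] [InnerProductSpace ℂ U] [CompleteSpace U]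
  [NormedAddCommGroup E₀] [InnerProductSpace ℂ E₀] [CompleteSpace E₀]

/-- Closedness of the operator `(L,K) : E₀ ⊆ E → H ⊕ U`: whenever `wₙ` in `E₀` with `wₙ → w`
in `E`, `Lwₙ → v` in `H` and `Kwₙ → z` in `U`, then `w ∈ E₀`, `Lw = v` and `Kw = z`. -/
def ClosedLK (j : E₀ →L[ℂ] E) (L : E₀ →L[ℂ] H) (K : E₀ →L[ℂ] U) : Prop :=
  ∀ (f : ℕ → E₀) (w : E) (v : H) (z : U),
    Tendsto (fun n => j (f n)) atTop (nhds w) →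
    Tendsto (fun n => L (f n)) atTop (nhds v) →
    Tendsto (fun n => K (f n)) atTop (nhds z) →
    ∃ w₀ : E₀, j w₀ = w ∧ L w₀ = v ∧ K w₀ = z

/-- The boundary relation `h` associated with `A`:
`h = {(x,y) ∈ BD(G) ⊕ BD(G) : π*x ∈ E₀, K^⋄Kπ*x − L^⋄π*Ġy ∈ E}`. -/
def hRel (G₀ : E →ₗ.[ℂ] H) (D₀ : H →ₗ.[ℂ] E) (j : E₀ →L[ℂ] E) (L : E₀ →L[ℂ] H)
    (K : E₀ →L[ℂ] U) : Set (E × E) :=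
  {p | p.1 ∈ BDG G₀ D₀ ∧ p.2 ∈ BDG G₀ D₀ ∧
    ∃ x₀ : E₀, j x₀ = p.1 ∧
      ∃ e : E, ∀ z : E₀, (⟪e, j z⟫ : ℂ) = ⟪K x₀, K z⟫ - ⟪Gap D₀ p.2, L z⟫}

/-- The adjoint relation of `h ⊆ BD(G) ⊕ BD(G)`, namely `h* = {(v,−u) : (u,v) ∈ h}^⊥` with
the orthogonal complement taken in `BD(G) ⊕ BD(G)`: a pair `(x,y) ∈ BD(G) ⊕ BD(G)` belongs
to `h*` iff `⟪v,x⟫_{BD(G)} = ⟪u,y⟫_{BD(G)}` for all `(u,v) ∈ h`. -/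
def adjBDG (G₀ : E →ₗ.[ℂ] H) (D₀ : H →ₗ.[ℂ] E) (h : Set (E × E)) : Set (E × E) :=
  {q | q.1 ∈ BDG G₀ D₀ ∧ q.2 ∈ BDG G₀ D₀ ∧
    ∀ p ∈ h, innG D₀ p.2 q.1 = innG D₀ p.1 q.2}

theorem Gap_add' (D₀ : H →ₗ.[ℂ] E) {x y : E} (hx : x ∈ (Gop D₀).domain)
    (hy : y ∈ (Gop D₀).domain) : Gap D₀ (x + y) = Gap D₀ x + Gap D₀ y := by
  have hxy := (Gop D₀).domain.add_mem hx hy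
  simp only [Gap, dif_pos hx, dif_pos hy, dif_pos hxy]
  exact (Gop D₀).map_add ⟨x, hx⟩ ⟨y, hy⟩

theorem Gap_sub' (D₀ : H →ₗ.[ℂ] E) {x y : E} (hx : x ∈ (Gop D₀).domain)
    (hy : y ∈ (Gop D₀).domain) : Gap D₀ (x - y) = Gap D₀ x - Gap D₀ y := by
  have h := Gap_add' D₀ ((Gop D₀).domain.sub_mem hx hy) hy
  rw [sub_add_cancel] at h
  rw [h, add_sub_cancel_right]

theorem innG_add_left (D₀ : H →ₗ.[ℂ] E) {x y : E} (hx : x ∈ (Gop D₀).domain)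
    (hy : y ∈ (Gop D₀).domain) (z : E) : innG D₀ (x + y) z = innG D₀ x z + innG D₀ y z := by
  simp only [innG, Gap_add' D₀ hx hy, inner_add_left]; ring

theorem innG_sub_left (D₀ : H →ₗ.[ℂ] E) {x y : E} (hx : x ∈ (Gop D₀).domain)
    (hy : y ∈ (Gop D₀).domain) (z : E) : innG D₀ (x - y) z = innG D₀ x z - innG D₀ y z := by
  simp only [innG, Gap_sub' D₀ hx hy, inner_sub_left]; ring

theorem innG_conj (D₀ : H →ₗ.[ℂ] E) (x y : E) :
    starRingEnd ℂ (innG D₀ x y) = innG D₀ y x := by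
  simp [innG, inner_conj_symm]

theorem innG_sub_right (D₀ : H →ₗ.[ℂ] E) {x y : E} (hx : x ∈ (Gop D₀).domain)
    (hy : y ∈ (Gop D₀).domain) (z : E) : innG D₀ z (x - y) = innG D₀ z x - innG D₀ z y := by
  simp only [innG, Gap_sub' D₀ hx hy, inner_sub_right]; ring

theorem innG_add_right (D₀ : H →ₗ.[ℂ] E) {x y : E} (hx : x ∈ (Gop D₀).domain)
    (hy : y ∈ (Gop D₀).domain) (z : E) : innG D₀ z (x + y) = innG D₀ z x + innG D₀ z y := by
  simp only [innG, Gap_add' D₀ hx hy, inner_add_right]; ring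

theorem innG_self_eq_zero (D₀ : H →ₗ.[ℂ] E) {x : E} (h : innG D₀ x x = 0) : x = 0 := by
  have h1 : (‖x‖ ^ 2 + ‖Gap D₀ x‖ ^ 2 : ℝ) = 0 := by
    have h2 := h
    simp only [innG, inner_self_eq_norm_sq_to_K] at h2
    apply Complex.ofReal_injective
    push_cast
    exact h2
  have : ‖x‖ = 0 := by
    have : ‖x‖ ^ 2 = 0 := by nlinarith [sq_nonneg ‖x‖, sq_nonneg ‖Gap D₀ x‖]
    exact pow_eq_zero_iff (two_ne_zero) |>.1 this
  exact norm_eq_zero.1 this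

/-- Solvability of the Riesz problem associated with the closed operator `(L,K)`. -/
theorem riesz_LK (j : E₀ →L[ℂ] E) (L : E₀ →L[ℂ] H) (K : E₀ →L[ℂ] U)
    (hclosed : ClosedLK j L K) (a : E) (b : H) :
    ∃ u : E₀, ∀ z : E₀,
      (⟪a - j u, j z⟫ : ℂ) + ⟪b - L u, L z⟫ = ⟪K u, K z⟫ := by
  let T : E₀ →ₗ[ℂ] WithLp 2 (E × WithLp 2 (H × U)) :=
    { toFun := fun z => WithLp.toLp 2 (j z, WithLp.toLp 2 (L z, K z))
      map_add' := by intro x y; simp [← WithLp.toLp_add]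
      map_smul' := by intro c x; simp [← WithLp.toLp_smul] }
  have hTc : IsClosed ((LinearMap.range T : Submodule ℂ _) : Set (WithLp 2 (E × WithLp 2 (H × U)))) := by
    apply IsSeqClosed.isClosed
    intro s l hs hl
    choose f hf using hs
    have h1 : Tendsto (fun n => (s n).fst) atTop (nhds l.fst) :=
      ((WithLp.prod_continuous_ofLp 2 E (WithLp 2 (H × U))).fst.tendsto l).comp hl
    have h2 : Tendsto (fun n => (s n).snd) atTop (nhds l.snd) :=
      ((WithLp.prod_continuous_ofLp 2 E (WithLp 2 (H × U))).snd.tendsto l).comp hl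
    have h3 : Tendsto (fun n => (s n).snd.fst) atTop (nhds l.snd.fst) :=
      ((WithLp.prod_continuous_ofLp 2 H U).fst.tendsto l.snd).comp h2
    have h4 : Tendsto (fun n => (s n).snd.snd) atTop (nhds l.snd.snd) :=
      ((WithLp.prod_continuous_ofLp 2 H U).snd.tendsto l.snd).comp h2
    simp only [← hf] at h1 h3 h4
    obtain ⟨w, e1, e2, e3⟩ := hclosed f _ _ _ h1 h3 h4
    refine ⟨w, ?_⟩
    change WithLp.toLp 2 (j w, WithLp.toLp 2 (L w, K w)) = l
    rw [e1, e2, e3]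
    rfl
  haveI : CompleteSpace (LinearMap.range T) := hTc.completeSpace_coe
  let p : WithLp 2 (E × WithLp 2 (H × U)) := WithLp.toLp 2 (a, WithLp.toLp 2 (b, 0))
  obtain ⟨q, hq, r, hr, hpq⟩ := (LinearMap.range T).exists_add_mem_mem_orthogonal p
  obtain ⟨u, rfl⟩ := hq
  refine ⟨u, fun z => ?_⟩
  have hz := (Submodule.mem_orthogonal' _ _).1 hr (T z) ⟨z, rfl⟩
  have hre : r = p - T u := by rw [hpq]; abel
  rw [hre] at hz
  have hz2 : (⟪a - j u, j z⟫ : ℂ) + (⟪b - L u, L z⟫ + ⟪0 - K u, K z⟫) = 0 := hz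
  rw [zero_sub, inner_neg_left] at hz2
  linear_combination hz2

/-- [Trostorff 2015, Proposition 3.5]: the boundary relation `h` is selfadjoint. -/
theorem hRel_selfadjoint (G₀ : E →ₗ.[ℂ] H) (D₀ : H →ₗ.[ℂ] E)
    (hG₀dense : Dense (G₀.domain : Set E)) (hD₀dense : Dense (D₀.domain : Set H))
    (hG₀closed : G₀.IsClosed) (hD₀closed : D₀.IsClosed)
    (hsub : G₀ ≤ Gop D₀)
    (j : E₀ →L[ℂ] E) (L : E₀ →L[ℂ] H) (K : E₀ →L[ℂ] U)
    (hj_inj : Function.Injective j) (hj_dense : DenseRange j)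
    (hclosed : ClosedLK j L K)
    (hLsubG : ∀ x : E₀, j x ∈ (Gop D₀).domain ∧ L x = Gap D₀ (j x))
    (hG₀subL : ∀ u ∈ G₀.domain, ∃ x : E₀, j x = u)
    (hK0 : ∀ x : E₀, j x ∈ G₀.domain → K x = 0) :
    hRel G₀ D₀ j L K = adjBDG G₀ D₀ (hRel G₀ D₀ j L K) := by
  have BD_sub : ∀ {x y}, x ∈ BDG G₀ D₀ → y ∈ BDG G₀ D₀ → x - y ∈ BDG G₀ D₀ := by
    intro x y hx hy
    refine ⟨(Gop D₀).domain.sub_mem hx.1 hy.1, fun v hv => ?_⟩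
    rw [innG_sub_left D₀ hx.1 hy.1, hx.2 v hv, hy.2 v hv, sub_zero]
  have BD_add : ∀ {x y}, x ∈ BDG G₀ D₀ → y ∈ BDG G₀ D₀ → x + y ∈ BDG G₀ D₀ := by
    intro x y hx hy
    refine ⟨(Gop D₀).domain.add_mem hx.1 hy.1, fun v hv => ?_⟩
    rw [innG_add_left D₀ hx.1 hy.1, hx.2 v hv, hy.2 v hv, add_zero]
  -- a variational description of the relation
  have fwd : ∀ p ∈ hRel G₀ D₀ j L K, ∃ x₀ : E₀, j x₀ = p.1 ∧
      ∀ z : E₀, innG D₀ p.2 (j z) = ⟪K x₀, K z⟫ := by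
    rintro ⟨x, y⟩ ⟨hx, hy, x₀, hx₀, e, he⟩
    refine ⟨x₀, hx₀, ?_⟩
    have hey : e = y := by
      rw [← sub_eq_zero]
      refine hG₀dense.eq_zero_of_inner_left (𝕜 := ℂ) ?_
      intro v hv
      obtain ⟨z, rfl⟩ := hG₀subL v hv
      have h1 := he z
      have h2 := hy.2 _ hv
      rw [hK0 z hv, inner_zero_right, (hLsubG z).2] at h1
      simp only [innG] at h1 h2
      rw [inner_sub_left]
      linear_combination h1 - h2
    intro z
    have h1 := he z
    rw [hey, (hLsubG z).2] at h1
    simp only [innG] at h1 ⊢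
    linear_combination h1
  have symm : ∀ p ∈ hRel G₀ D₀ j L K, ∀ q ∈ hRel G₀ D₀ j L K,
      innG D₀ p.2 q.1 = innG D₀ p.1 q.2 := by
    intro p hp q hq
    obtain ⟨x, hx, hx'⟩ := fwd p hp
    obtain ⟨u, hu, hu'⟩ := fwd q hq
    rw [← hu, hx' u, ← innG_conj, ← hx, hu' x, inner_conj_symm]
  have surj : ∀ f ∈ BDG G₀ D₀, ∃ u, (u, f - u) ∈ hRel G₀ D₀ j L K := by
    intro f hf
    obtain ⟨u, hu⟩ := riesz_LK j L K hclosed f (Gap D₀ f)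
    have hG : ∀ z : E₀, innG D₀ f (j z) - innG D₀ (j u) (j z) = ⟪K u, K z⟫ := by
      intro z
      have := hu z
      rw [(hLsubG u).2, (hLsubG z).2, inner_sub_left, inner_sub_left] at this
      simp only [innG]
      linear_combination this
    have hub : j u ∈ BDG G₀ D₀ := by
      refine ⟨(hLsubG u).1, fun v hv => ?_⟩
      obtain ⟨z, rfl⟩ := hG₀subL v hv
      have := hG z
      rw [hf.2 _ hv, hK0 z hv, inner_zero_right] at this
      linear_combination -this
    refine ⟨j u, hub, BD_sub hf hub, u, rfl, f - j u, fun z => ?_⟩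
    have := hu z
    rw [Gap_sub' D₀ hf.1 hub.1, ← (hLsubG u).2]
    linear_combination this
  apply Set.Subset.antisymm
  · intro q hq
    exact ⟨hq.1, hq.2.1, fun p hp => symm p hp q hq⟩
  · rintro ⟨x, y⟩ ⟨hx, hy, hxy⟩
    simp only at hx hy hxy
    obtain ⟨u, hu⟩ := surj (x + y) (BD_add hx hy)
    have hub : u ∈ BDG G₀ D₀ := hu.1
    obtain ⟨w, hw⟩ := surj (x - u) (BD_sub hx hub)
    have hwb : w ∈ BDG G₀ D₀ := hw.1
    have h1 := hxy _ hw
    have h2 := symm _ hw _ hu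
    simp only at h1 h2
    have hd : x - u = 0 := by
      apply innG_self_eq_zero D₀
      have hxu := (BD_sub hx hub).1
      rw [innG_sub_left D₀ hxu hwb.1] at h1 h2
      rw [innG_sub_right D₀ (BD_add hx hy).1 hub.1, innG_add_right D₀ hx.1 hy.1] at h2
      rw [innG_sub_right D₀ hx.1 hub.1]
      linear_combination h1 - h2
    have hxu : x = u := sub_eq_zero.1 hd
    subst hxu
    simpa using hu
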